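/- arXiv:2508.03778 — 2 statements merged into one kernel-verified Lean document; each statement's English description precedes it below -/
import Mathlib

section
/- Let G be a connected non-complete graph of order n ≥ 18 with toughness t(G) ≥ 1. If ρ(G) ≥ ρ(M_n), then G contains a Hamiltonian cycle, unless G is isomorphic to M_n. -/
open SimpleGraph

/-- The number of connected components of `G - S`. -/
noncomputable def numComp {V : Type*} (G : SimpleGraph V) (S : Set V) : ℕ :=
  Nat.card (SimpleGraph.ConnectedComponent (SimpleGraph.induce Sᶜ G))

/-- `X, Y` form a bipartition of the graph `G`. -/
def IsBipartition {V : Type*} (G : SimpleGraph V) (X Y : Set V) : Prop :=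
  X ∪ Y = Set.univ ∧ Disjoint X Y ∧
    ∀ ⦃u v⦄, G.Adj u v → (u ∈ X ∧ v ∈ Y) ∨ (u ∈ Y ∧ v ∈ X)

/-- The bipartite toughness of `G` (with parts `X`, `Y`) is at least `1`:
`c(G - S) ≤ |S|` for every proper subset `S ⊂ X` (or `S ⊂ Y`) with `c(G - S) > 1`. -/
def BTough1 {V : Type*} (G : SimpleGraph V) (X Y : Set V) : Prop :=
  ∀ S : Set V, (S ⊂ X ∨ S ⊂ Y) → 1 < numComp G S → numComp G S ≤ S.ncard

/-- The toughness of a (non-complete) graph `G`. -/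
noncomputable def toughness {V : Type*} (G : SimpleGraph V) : ℝ :=
  sInf {x : ℝ | ∃ S : Set V, 1 < numComp G S ∧ x = (S.ncard : ℝ) / (numComp G S : ℝ)}

/-- The spectral radius of `G`: the largest eigenvalue of its adjacency matrix. -/
noncomputable def specRad {V : Type*} [Fintype V] (G : SimpleGraph V) : ℝ :=
  letI := Classical.decRel G.Adj
  sSup {μ : ℝ | Module.End.HasEigenvalue (Matrix.mulVecLin (G.adjMatrix ℝ)) μ}

/-- `G` has a 2-factor: a spanning subgraph in which every vertex has degree 2. -/
def Has2Factor {V : Type*} (G : SimpleGraph V) : Prop :=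
  ∃ F : SimpleGraph V, F ≤ G ∧ ∀ v, (F.neighborSet v).ncard = 2

/-- The graph `G_{n,n}`: parts `X = {u_1,…,u_n}` (left) and `Y = {v_1,…,v_n}` (right);
`u_i ~ v_j` for all `i` and all `j ≥ 4`; moreover `v_1, v_2, v_3` are joined to `u_1`,
and `v_i` is joined to `u_{i+1}` for `1 ≤ i ≤ 3` (indices here are 0-based). -/
def Gnn (n : ℕ) : SimpleGraph (Fin n ⊕ Fin n) :=
  SimpleGraph.fromRel fun a b =>
    match a, b with
    | Sum.inl i, Sum.inr j =>
        3 ≤ (j : ℕ) ∨ ((j : ℕ) < 3 ∧ ((i : ℕ) = 0 ∨ (i : ℕ) = (j : ℕ) + 1))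
    | _, _ => False

/-- The graph `M_n`: the complete graph on `{v_1,…,v_{n-3}}` (the vertices of index `< n-3`),
together with three vertices `u_1, u_2, u_3` (the vertices of index `≥ n-3`), each joined to
`v_1` (index `0`), and `u_i` joined to `v_{i+1}` for `1 ≤ i ≤ 3`. -/
def Mn (n : ℕ) : SimpleGraph (Fin n) :=
  SimpleGraph.fromRel fun a b =>
    ((a : ℕ) < n - 3 ∧ (b : ℕ) < n - 3) ∨
      (n - 3 ≤ (a : ℕ) ∧ ((b : ℕ) = 0 ∨ (b : ℕ) = (a : ℕ) - (n - 3) + 1))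

/-
Edges are added to `G` for as long as it stays non-Hamiltonian. In the resulting graph `H`, two
non-adjacent vertices have degree sum less than `n` (Ore, Bondy–Chvátal), so the vertices of degree
at least `n / 2` form a clique; extend it to a maximal clique, with complement `U`. As
`ρ(H) ≥ ρ(G) ≥ ρ(M_n) > n - 4`, Hong's bound `ρ² - (d - 1) ρ ≤ 2 m - d (n - 1)` for minimum
degree `d` leaves so few missing edges that `|U| ≤ 3`. Toughness excludes `|U| ≤ 2` unless `U` is
empty, which makes `H` complete. If `|U| = 3`, a non-Hamiltonian `H` has `U` independent, with all
degrees `2` and a common neighbour, that is, `H ≅ M_n`. Since adding edges to a graph strictly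
increases the spectral radius when the result is connected, `ρ(G) ≥ ρ(M_n)` forces `G = H`.
-/

section SpectralRadius

open Matrix
open scoped Finset

variable {V W : Type*}

theorem ite_adj_le_ite_adj {G H : SimpleGraph V} [DecidableRel G.Adj] [DecidableRel H.Adj]
    (h : G ≤ H) {x : V → ℝ} (hx : 0 ≤ x) (i j : V) :
    (if G.Adj i j then x i * x j else 0) ≤ if H.Adj i j then x i * x j else 0 := by
  have := mul_nonneg (hx i) (hx j)
  split_ifs with hG hH <;> first | exact absurd (h hG) hH | simp [this]

variable [Fintype V] [Fintype W]

theorem le_specRad_of_mulVec_eq {G : SimpleGraph V} [DecidableRel G.Adj] {x : V → ℝ} {r : ℝ}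
    (hx₀ : x ≠ 0) (hx : G.adjMatrix ℝ *ᵥ x = r • x) : r ≤ specRad G := by
  refine le_csSup (Module.End.finite_hasEigenvalue _).bddAbove ?_
  refine Module.End.hasEigenvalue_of_hasEigenvector
    (Module.End.hasEigenvector_iff.2 ⟨Module.End.mem_eigenspace_iff.2 ?_, hx₀⟩)
  rw [mulVecLin_apply, ← hx]
  congr!

theorem exists_mulVec_eq_specRad_smul [Nonempty V] (G : SimpleGraph V) [DecidableRel G.Adj] :
    ∃ x : V → ℝ, x ≠ 0 ∧ G.adjMatrix ℝ *ᵥ x = specRad G • x := by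
  classical
  have hne : {μ : ℝ | Module.End.HasEigenvalue (G.adjMatrix ℝ).mulVecLin μ}.Nonempty := by
    have hA : (G.adjMatrix ℝ).IsHermitian := G.isSymm_adjMatrix
    obtain ⟨i⟩ := ‹Nonempty V›
    exact ⟨hA.eigenvalues i, Module.End.hasEigenvalue_of_hasEigenvector
      (Module.End.hasEigenvector_iff.2 ⟨Module.End.mem_eigenspace_iff.2
        (hA.mulVec_eigenvectorBasis i),
        (WithLp.ofLp_eq_zero 2).not.2 (hA.eigenvectorBasis.orthonormal.ne_zero i)⟩)⟩
  have hmax := hne.csSup_mem (Module.End.finite_hasEigenvalue _)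
  obtain ⟨x, hx⟩ := Module.End.HasEigenvalue.exists_hasEigenvector hmax
  refine ⟨x, hx.2, hx.apply_eq_smul.trans ?_⟩
  rw [specRad]
  congr!

theorem posSemidef_specRad_smul_one_sub_adjMatrix [DecidableEq V] (G : SimpleGraph V)
    [DecidableRel G.Adj] : (specRad G • (1 : Matrix V V ℝ) - G.adjMatrix ℝ).PosSemidef := by
  have hB : (specRad G • (1 : Matrix V V ℝ) - G.adjMatrix ℝ).IsHermitian :=
    (isHermitian_one.smul (.all _)).sub G.isSymm_adjMatrix
  refine hB.posSemidef_iff_eigenvalues_nonneg.2 fun i ↦ ?_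
  have hA : G.adjMatrix ℝ *ᵥ (hB.eigenvectorBasis i).ofLp =
      (specRad G - hB.eigenvalues i) • (hB.eigenvectorBasis i).ofLp := by
    rw [sub_smul, ← hB.mulVec_eigenvectorBasis i, sub_mulVec, smul_mulVec, one_mulVec,
      sub_sub_cancel]
  simpa using le_specRad_of_mulVec_eq
    ((WithLp.ofLp_eq_zero 2).not.2 (hB.eigenvectorBasis.orthonormal.ne_zero i)) hA

theorem dotProduct_specRad_smul_one_sub_mulVec [DecidableEq V] (G : SimpleGraph V)
    [DecidableRel G.Adj] (x : V → ℝ) :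
    x ⬝ᵥ (specRad G • (1 : Matrix V V ℝ) - G.adjMatrix ℝ) *ᵥ x =
      specRad G * (x ⬝ᵥ x) - x ⬝ᵥ G.adjMatrix ℝ *ᵥ x := by
  rw [sub_mulVec, smul_mulVec, one_mulVec, dotProduct_sub, dotProduct_smul, smul_eq_mul]

theorem dotProduct_adjMatrix_mulVec_le (G : SimpleGraph V) [DecidableRel G.Adj] (x : V → ℝ) :
    x ⬝ᵥ G.adjMatrix ℝ *ᵥ x ≤ specRad G * (x ⬝ᵥ x) := by
  classical
  have h := (posSemidef_specRad_smul_one_sub_adjMatrix G).dotProduct_mulVec_nonneg x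
  rwa [star_trivial, dotProduct_specRad_smul_one_sub_mulVec, sub_nonneg] at h

theorem adjMatrix_mulVec_eq_of_specRad_mul_le {G : SimpleGraph V} [DecidableRel G.Adj]
    {x : V → ℝ} (hx : specRad G * (x ⬝ᵥ x) ≤ x ⬝ᵥ G.adjMatrix ℝ *ᵥ x) :
    G.adjMatrix ℝ *ᵥ x = specRad G • x := by
  classical
  have h := (posSemidef_specRad_smul_one_sub_adjMatrix G).dotProduct_mulVec_zero_iff x
  rw [star_trivial, dotProduct_specRad_smul_one_sub_mulVec, sub_eq_zero, sub_mulVec, smul_mulVec,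
    one_mulVec, sub_eq_zero] at h
  exact (h.1 (hx.antisymm (dotProduct_adjMatrix_mulVec_le G x))).symm

theorem specRad_mul_dotProduct_self {G : SimpleGraph V} [DecidableRel G.Adj] {x : V → ℝ}
    (hx : G.adjMatrix ℝ *ᵥ x = specRad G • x) :
    specRad G * (x ⬝ᵥ x) = x ⬝ᵥ G.adjMatrix ℝ *ᵥ x := by
  rw [hx, dotProduct_smul, smul_eq_mul]

theorem dotProduct_adjMatrix_mulVec_eq_sum (G : SimpleGraph V) [DecidableRel G.Adj] (x : V → ℝ) :
    x ⬝ᵥ G.adjMatrix ℝ *ᵥ x = ∑ i, ∑ j, if G.Adj i j then x i * x j else 0 := by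
  simp [dotProduct, mulVec, Finset.mul_sum]

theorem exists_nonneg_mulVec_eq_specRad_smul [Nonempty V] (G : SimpleGraph V)
    [DecidableRel G.Adj] :
    ∃ x : V → ℝ, 0 ≤ x ∧ x ≠ 0 ∧ G.adjMatrix ℝ *ᵥ x = specRad G • x := by
  obtain ⟨z, hz₀, hz⟩ := exists_mulVec_eq_specRad_smul G
  have habs : |z| ≠ 0 := fun h ↦ hz₀ (funext fun v ↦ abs_eq_zero.1 (congrFun h v))
  refine ⟨|z|, abs_nonneg z, habs, adjMatrix_mulVec_eq_of_specRad_mul_le ?_⟩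
  calc specRad G * (|z| ⬝ᵥ |z|) = specRad G * (z ⬝ᵥ z) := by simp [dotProduct]
    _ = z ⬝ᵥ G.adjMatrix ℝ *ᵥ z := specRad_mul_dotProduct_self hz
    _ ≤ |z| ⬝ᵥ G.adjMatrix ℝ *ᵥ |z| := by
        simp only [dotProduct_adjMatrix_mulVec_eq_sum, Pi.abs_apply, ← abs_mul]
        gcongr with i _ j _
        split_ifs
        exacts [le_abs_self _, le_rfl]

theorem pos_of_adjMatrix_mulVec_eq {G : SimpleGraph V} [DecidableRel G.Adj]
    (hG : G.Connected) {x : V → ℝ} {r : ℝ} (hx : 0 ≤ x) (hx₀ : x ≠ 0)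
    (hr : G.adjMatrix ℝ *ᵥ x = r • x) (v : V) : 0 < x v := by
  have hadj ⦃a b⦄ (hab : G.Adj a b) (ha : x a = 0) : x b = 0 := by
    have h := congrFun hr a
    rw [adjMatrix_mulVec_apply, Pi.smul_apply, ha, smul_zero,
      Finset.sum_eq_zero_iff_of_nonneg fun i _ ↦ hx i] at h
    exact h b ((G.mem_neighborFinset a b).2 hab)
  have hwalk {a b : V} (p : G.Walk a b) (ha : x a = 0) : x b = 0 := by
    induction p with
    | nil => exact ha
    | cons h _ ih => exact ih (hadj h ha)
  refine (hx v).lt_of_ne' fun hv ↦ hx₀ (funext fun w ↦ ?_)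
  exact hwalk (hG.preconnected v w).some hv

theorem pos_of_specRad_mul_le {G : SimpleGraph V} [DecidableRel G.Adj] (hG : G.Connected)
    {x : V → ℝ} (hx : 0 ≤ x) (hx₀ : x ≠ 0)
    (h : specRad G * (x ⬝ᵥ x) ≤ x ⬝ᵥ G.adjMatrix ℝ *ᵥ x) (v : V) : 0 < x v :=
  pos_of_adjMatrix_mulVec_eq hG hx hx₀ (adjMatrix_mulVec_eq_of_specRad_mul_le h) v

theorem dotProduct_adjMatrix_mulVec_mono {G H : SimpleGraph V} [DecidableRel G.Adj]
    [DecidableRel H.Adj] (h : G ≤ H) {x : V → ℝ} (hx : 0 ≤ x) :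
    x ⬝ᵥ G.adjMatrix ℝ *ᵥ x ≤ x ⬝ᵥ H.adjMatrix ℝ *ᵥ x := by
  simp only [dotProduct_adjMatrix_mulVec_eq_sum]
  exact Finset.sum_le_sum fun i _ ↦ Finset.sum_le_sum fun j _ ↦ ite_adj_le_ite_adj h hx i j

theorem dotProduct_adjMatrix_mulVec_strictMono {G H : SimpleGraph V} [DecidableRel G.Adj]
    [DecidableRel H.Adj] (h : G < H) {x : V → ℝ} (hx : ∀ v, 0 < x v) :
    x ⬝ᵥ G.adjMatrix ℝ *ᵥ x < x ⬝ᵥ H.adjMatrix ℝ *ᵥ x := by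
  obtain ⟨a, b, hH, hG⟩ : ∃ a b, H.Adj a b ∧ ¬G.Adj a b := by
    by_contra! hle
    exact h.not_ge fun a b ↦ hle a b
  have hle := ite_adj_le_ite_adj h.le fun v ↦ (hx v).le
  simp only [dotProduct_adjMatrix_mulVec_eq_sum]
  refine Finset.sum_lt_sum (fun i _ ↦ Finset.sum_le_sum fun j _ ↦ hle i j)
    ⟨a, Finset.mem_univ a, ?_⟩
  refine Finset.sum_lt_sum (fun j _ ↦ hle a j) ⟨b, Finset.mem_univ b, ?_⟩
  simpa [hH, hG] using mul_pos (hx a) (hx b)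

/- If `ρ(H) ≤ ρ(G)`, then the Perron vector of `G` is one of `H`, hence positive. -/
theorem specRad_lt_of_lt {G H : SimpleGraph V} (hH : H.Connected) (h : G < H) :
    specRad G < specRad H := by
  classical
  have := hH.nonempty
  obtain ⟨x, hx, hx₀, hGx⟩ := exists_nonneg_mulVec_eq_specRad_smul G
  have hxx : 0 ≤ x ⬝ᵥ x := Finset.sum_nonneg fun i _ ↦ mul_self_nonneg _
  by_contra! hle
  have hHx : specRad H * (x ⬝ᵥ x) ≤ x ⬝ᵥ G.adjMatrix ℝ *ᵥ x :=
    (mul_le_mul_of_nonneg_right hle hxx).trans_eq (specRad_mul_dotProduct_self hGx)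
  have hpos := pos_of_specRad_mul_le hH hx hx₀
    (hHx.trans (dotProduct_adjMatrix_mulVec_mono h.le hx))
  refine (dotProduct_adjMatrix_mulVec_strictMono h hpos).not_ge ?_
  exact (dotProduct_adjMatrix_mulVec_le H x).trans hHx

theorem specRad_mono [Nonempty V] {G H : SimpleGraph V} (h : G ≤ H) : specRad G ≤ specRad H := by
  classical
  obtain ⟨x, hx, hx₀, hGx⟩ := exists_nonneg_mulVec_eq_specRad_smul G
  have hxx : 0 < x ⬝ᵥ x := by simpa using dotProduct_star_self_pos_iff.2 hx₀
  refine le_of_mul_le_mul_right ?_ hxx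
  calc specRad G * (x ⬝ᵥ x) = x ⬝ᵥ G.adjMatrix ℝ *ᵥ x := specRad_mul_dotProduct_self hGx
    _ ≤ x ⬝ᵥ H.adjMatrix ℝ *ᵥ x := dotProduct_adjMatrix_mulVec_mono h hx
    _ ≤ specRad H * (x ⬝ᵥ x) := dotProduct_adjMatrix_mulVec_le H x

theorem specRad_le_of_iso [Nonempty V] {G : SimpleGraph V} {H : SimpleGraph W} (e : G ≃g H) :
    specRad G ≤ specRad H := by
  classical
  obtain ⟨x, hx₀, hx⟩ := exists_mulVec_eq_specRad_smul G
  have hHx : H.adjMatrix ℝ *ᵥ (x ∘ e.symm) = specRad G • (x ∘ e.symm) := by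
    rw [← e.symm.toEmbedding.submatrix_adjMatrix ℝ]
    have h := submatrix_mulVec_equiv (G.adjMatrix ℝ) (x ∘ e.symm) e.symm e.symm.toEquiv
    have hx' : (x ∘ e.symm) ∘ e.symm.toEquiv.symm = x := by
      ext v
      exact congrArg x (e.symm_apply_apply v)
    rw [hx', hx] at h
    exact h
  exact le_specRad_of_mulVec_eq
    (fun h ↦ hx₀ (e.symm.surjective.injective_comp_right (h.trans rfl))) hHx

theorem dotProduct_adjMatrix_mulVec_indicator_of_isClique {G : SimpleGraph V} [DecidableRel G.Adj]
    [DecidableEq V] {C : Finset V} (hC : G.IsClique C) :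
    (fun v ↦ if v ∈ C then (1 : ℝ) else 0) ⬝ᵥ
      G.adjMatrix ℝ *ᵥ (fun v ↦ if v ∈ C then (1 : ℝ) else 0) = #C * (#C - 1) := by
  have hdeg (v : V) (hv : v ∈ C) : G.neighborFinset v ∩ C = C.erase v := by
    ext w
    simp only [Finset.mem_inter, mem_neighborFinset, Finset.mem_erase]
    exact ⟨fun h ↦ ⟨h.1.ne', h.2⟩, fun h ↦ ⟨hC hv h.2 h.1.symm, h.2⟩⟩
  have hcard (v : V) (hv : v ∈ C) : (#(G.neighborFinset v ∩ C) : ℝ) = #C - 1 := by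
    rw [hdeg v hv, Finset.cast_card_erase_of_mem hv]
  simp [dotProduct, adjMatrix_mulVec_apply, Finset.sum_congr rfl hcard, mul_sub]

theorem card_sub_one_lt_specRad {G : SimpleGraph V} (hG : G.Connected) {C : Finset V}
    (hC : G.IsClique C) (hne : C.Nonempty) {u : V} (hu : u ∉ C) : (#C : ℝ) - 1 < specRad G := by
  classical
  set x : V → ℝ := fun v ↦ if v ∈ C then 1 else 0
  have hx : 0 ≤ x := fun v ↦ by simp only [x]; split_ifs <;> simp
  obtain ⟨c, hc⟩ := hne
  have hx₀ : x ≠ 0 := fun h ↦ by simpa [x, hc] using congrFun h c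
  by_contra! hle
  refine (pos_of_specRad_mul_le hG hx hx₀ ?_ u).ne' (if_neg hu)
  rw [dotProduct_adjMatrix_mulVec_indicator_of_isClique hC, mul_comm]
  have hxx : x ⬝ᵥ x = #C := by simp [x, dotProduct]
  rw [hxx]
  gcongr

theorem sum_degree_neighborFinset_le {G : SimpleGraph V} [DecidableRel G.Adj] {d : ℕ}
    (hd : ∀ v, d ≤ G.degree v) (w : V) :
    ∑ v ∈ G.neighborFinset w, (G.degree v : ℝ) ≤
      ∑ v, (G.degree v : ℝ) - d * (Fintype.card V - 1) + (d - 1) * G.degree w := by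
  classical
  have hw : w ∉ G.neighborFinset w := by simp
  set N := insert w (G.neighborFinset w) with hN
  have hsum : ∑ v ∈ N, (G.degree v : ℝ) + ∑ v ∈ Nᶜ, (G.degree v : ℝ) = ∑ v, (G.degree v : ℝ) :=
    Finset.sum_add_sum_compl N _
  have hcompl : (#Nᶜ : ℝ) * d ≤ ∑ v ∈ Nᶜ, (G.degree v : ℝ) := by
    rw [← nsmul_eq_mul]
    exact Finset.card_nsmul_le_sum _ _ _ fun v _ ↦ by exact_mod_cast hd v
  have hcard : (#Nᶜ : ℝ) = Fintype.card V - (G.degree w + 1) := by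
    rw [Finset.card_compl, Nat.cast_sub N.card_le_univ, hN, Finset.card_insert_of_notMem hw,
      card_neighborFinset_eq_degree, Nat.cast_succ]
  rw [hN, Finset.sum_insert hw] at hsum
  rw [hcard] at hcompl
  linarith

theorem specRad_sq_sub_le [Nonempty V] {G : SimpleGraph V} [DecidableRel G.Adj] {d : ℕ}
    (hd : ∀ v, d ≤ G.degree v) :
    specRad G ^ 2 - (d - 1) * specRad G ≤
      ∑ v, (G.degree v : ℝ) - d * (Fintype.card V - 1) := by
  obtain ⟨x, hx, hx₀, hGx⟩ := exists_nonneg_mulVec_eq_specRad_smul G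
  have heigen (f : V → ℝ) : x ⬝ᵥ G.adjMatrix ℝ *ᵥ f = specRad G * (x ⬝ᵥ f) := by
    rw [dotProduct_mulVec, ← mulVec_transpose, transpose_adjMatrix, hGx, smul_dotProduct,
      smul_eq_mul]
  set deg : V → ℝ := fun v ↦ G.degree v with hdeg
  set c : ℝ := ∑ v, deg v - d * (Fintype.card V - 1) with hc
  have hone : G.adjMatrix ℝ *ᵥ 1 = deg := by
    ext v
    simp [adjMatrix_mulVec_apply, hdeg]
  have hle : G.adjMatrix ℝ *ᵥ deg ≤ c • 1 + ((d : ℝ) - 1) • deg := fun w ↦ by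
    rw [adjMatrix_mulVec_apply]
    simpa [hc, hdeg] using sum_degree_neighborFinset_le hd w
  have hmain := dotProduct_le_dotProduct_of_nonneg_left hle hx
  rw [dotProduct_add, dotProduct_smul, dotProduct_smul, heigen, ← hone, heigen, smul_eq_mul,
    smul_eq_mul] at hmain
  have hpos : 0 < x ⬝ᵥ (1 : V → ℝ) := by
    obtain ⟨v, hv⟩ := Function.ne_iff.1 hx₀
    rw [dotProduct_one]
    exact Finset.sum_pos' (fun v _ ↦ hx v) ⟨v, Finset.mem_univ v, (hx v).lt_of_ne' hv⟩
  refine le_of_mul_le_mul_right ?_ hpos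
  linarith

end SpectralRadius

section Hamiltonicity

open scoped Finset

variable {V : Type*} [Fintype V] [DecidableEq V] {G : SimpleGraph V}

theorem isHamiltonian_of_isHamiltonian_walk_of_adj (hV : 3 ≤ Fintype.card V) {u v : V}
    {p : G.Walk u v} (hp : p.IsHamiltonian) (h : G.Adj v u) : G.IsHamiltonian := by
  have hlen := hp.length_eq
  refine fun _ ↦ ⟨v, .cons h p, Walk.isHamiltonianCycle_iff_isCycle_and_length_eq.2 ⟨?_, ?_⟩⟩
  · refine (Walk.cons_isCycle_iff p h).2 ⟨hp.isPath, fun hmem ↦ ?_⟩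
    have := hp.isPath.length_eq_one_of_mem_edges (Sym2.eq_swap ▸ hmem)
    omega
  · rw [Walk.length_cons]
    omega

theorem isHamiltonian_of_isChain (hV : 3 ≤ Fintype.card V) {l : List V} (hne : l ≠ [])
    (hnodup : l.Nodup) (hmem : ∀ v, v ∈ l) (hchain : l.IsChain G.Adj)
    (hclose : G.Adj (l.getLast hne) (l.head hne)) : G.IsHamiltonian := by
  have hsupp := Walk.support_ofSupport hne hchain
  have hpath : (Walk.ofSupport l hne hchain).IsPath := .mk' (by rwa [hsupp])
  exact isHamiltonian_of_isHamiltonian_walk_of_adj hV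
    (hpath.isHamiltonian_of_mem fun v ↦ by rw [hsupp]; exact hmem v) hclose

theorem isHamiltonian_of_isChain_of_isClique (hV : 3 ≤ Fintype.card V) {C : Set V}
    (hC : G.IsClique C) {l : List V} (hne : l ≠ []) (hnodup : l.Nodup) (hchain : l.IsChain G.Adj)
    (hcover : ∀ v ∉ C, v ∈ l) (hhead : l.head hne ∈ C) (hlast : l.getLast hne ∈ C) :
    G.IsHamiltonian := by
  set r := (Finset.univ \ l.toFinset).toList with hr
  have hmem_r (v : V) : v ∈ r ↔ v ∉ l := by simp [hr]
  have hrC (v : V) (hv : v ∈ r) : v ∈ C := not_imp_comm.1 (hcover v) ((hmem_r v).1 hv)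
  have hr_nodup : r.Nodup := Finset.nodup_toList _
  have hdisj (a : V) (ha : a ∈ l) (b : V) (hb : b ∈ r) : a ≠ b := fun h ↦ (hmem_r b).1 hb (h ▸ ha)
  have hnodup' : (l ++ r).Nodup := List.nodup_append.2 ⟨hnodup, hr_nodup, hdisj⟩
  have hmem (v : V) : v ∈ l ++ r := by
    rw [List.mem_append, hmem_r]
    exact em _
  have hne' : l ++ r ≠ [] := List.append_ne_nil_of_left_ne_nil hne r
  have hlen : (l ++ r).length = Fintype.card V := by
    rw [← List.toFinset_card_of_nodup hnodup', Finset.card_eq_iff_eq_univ]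
    ext v
    simpa using hmem v
  refine isHamiltonian_of_isChain hV hne' hnodup' hmem ?_ (hC ?_ ?_ ?_)
  · refine List.isChain_append.2 ⟨hchain, (hr_nodup.imp_of_mem fun ha hb hab ↦
      hC (hrC _ ha) (hrC _ hb) hab).isChain, fun a ha b hb ↦ ?_⟩
    have hb := List.mem_of_mem_head? hb
    obtain rfl : l.getLast hne = a := by simpa [List.getLast?_eq_some_getLast hne] using ha
    exact hC hlast (hrC b hb) (hdisj _ (List.getLast_mem hne) b hb)
  · rcases eq_or_ne r [] with h | h
    · simpa [h] using hlast
    · rw [List.getLast_append_of_ne_nil _ h]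
      exact hrC _ (List.getLast_mem h)
  · rwa [List.head_append_of_ne_nil hne]
  · rw [List.head_eq_getElem, List.getLast_eq_getElem, Ne, hnodup'.getElem_inj_iff]
    omega

theorem exists_isHamiltonian_walk_of_not_isHamiltonian [Nontrivial V] {u v : V}
    (hG : ¬G.IsHamiltonian) (huv : (G ⊔ edge u v).IsHamiltonian) :
    ∃ p : G.Walk v u, p.IsHamiltonian := by
  have hadj (e : Sym2 V) (he : e ∈ (G ⊔ edge u v).edgeSet) (hne : e ≠ s(u, v)) :
      e ∈ G.edgeSet := by
    rw [edgeSet_sup] at he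
    exact he.resolve_right fun h ↦ hne (edgeSet_edge_subset h)
  obtain ⟨c, hc⟩ := huv.exists_isHamiltonianCycle u
  have huvc : s(u, v) ∈ c.edges := by
    by_contra hnot
    have hcG (e : Sym2 V) (he : e ∈ c.edges) : e ∈ G.edgeSet :=
      hadj e (c.edges_subset_edgeSet he) fun h ↦ hnot (h ▸ he)
    refine hG fun _ ↦ ⟨u, c.transfer G hcG, ?_⟩
    rw [Walk.isHamiltonianCycle_iff_isCycle_and_length_eq, Walk.length_transfer]
    exact ⟨hc.isCycle.transfer hcG, hc.length_eq⟩
  obtain ⟨q, hq, hsnd, hverts⟩ := hc.isCycle.exists_isCycle_snd_verts_eq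
    (c.adj_toSubgraph_iff_mem_edges.2 huvc)
  have hq' := hq
  rw [← q.cons_tail_eq hq.not_nil, Walk.cons_isCycle_iff] at hq'
  have hedge : s(u, q.snd) = s(u, v) := by rw [hsnd]
  have htail (e : Sym2 V) (he : e ∈ q.tail.edges) : e ∈ G.edgeSet :=
    hadj e (q.tail.edges_subset_edgeSet he) fun h ↦ hq'.2 ((h.trans hedge.symm) ▸ he)
  rw [← hsnd]
  refine ⟨q.tail.transfer G htail, (hq'.1.transfer htail).isHamiltonian_of_mem fun w ↦ ?_⟩
  rw [Walk.support_transfer]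
  have hw : w ∈ q.support := by
    rw [← Walk.mem_verts_toSubgraph, hverts, Walk.mem_verts_toSubgraph]
    exact hc.mem_support w
  rw [← q.cons_tail_eq hq.not_nil, Walk.support_cons, List.mem_cons] at hw
  exact hw.elim (fun h ↦ h ▸ q.tail.end_mem_support) id

theorem not_adj_end_getVert_of_not_isHamiltonian (hV : 3 ≤ Fintype.card V)
    (hG : ¬G.IsHamiltonian) {u v : V} {p : G.Walk u v} (hp : p.IsHamiltonian) {i : ℕ}
    (hi : i < p.length) (hu : G.Adj u (p.getVert (i + 1))) : ¬G.Adj v (p.getVert i) := by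
  intro hv
  set q := (p.take i).append (.cons hv.symm (p.drop (i + 1)).reverse) with hq
  have hsupp : q.support.Perm p.support := by
    rw [hq, Walk.support_append, Walk.support_cons, List.tail_cons, Walk.support_take,
      Walk.support_reverse, Walk.drop_support_eq_support_drop_min, min_eq_left hi]
    conv_rhs => rw [← List.take_append_drop (i + 1) p.support]
    exact (List.reverse_perm _).append_left _
  have hqham : q.IsHamiltonian := fun w ↦ (hsupp.count_eq w).trans (hp w)
  exact hG (isHamiltonian_of_isHamiltonian_walk_of_adj hV hqham hu.symm)

theorem degree_add_degree_lt_of_isHamiltonian_walk [DecidableRel G.Adj]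
    (hV : 3 ≤ Fintype.card V) (hG : ¬G.IsHamiltonian) {u v : V} {p : G.Walk u v}
    (hp : p.IsHamiltonian) : G.degree u + G.degree v < Fintype.card V := by
  set I := (Finset.range p.length).filter fun i ↦ G.Adj v (p.getVert i) with hI
  set J := (Finset.range p.length).filter fun i ↦ G.Adj u (p.getVert (i + 1)) with hJ
  have hvI : G.neighborFinset v ⊆ I.image p.getVert := fun w hw ↦ by
    rw [mem_neighborFinset] at hw
    obtain ⟨i, rfl, hi⟩ := Walk.mem_support_iff_exists_getVert.1 (hp.mem_support w)
    have hne : i ≠ p.length := by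
      rintro rfl
      exact hw.ne p.getVert_length.symm
    exact Finset.mem_image_of_mem _ (by simp [hI, hw, hi.lt_of_ne hne])
  have huJ : G.neighborFinset u ⊆ J.image fun i ↦ p.getVert (i + 1) := fun w hw ↦ by
    rw [mem_neighborFinset] at hw
    obtain ⟨i, rfl, hi⟩ := Walk.mem_support_iff_exists_getVert.1 (hp.mem_support w)
    cases i with
    | zero => exact absurd p.getVert_zero.symm hw.ne
    | succ i => exact Finset.mem_image.2 ⟨i, by simp [hJ, hw, Nat.lt_of_succ_le hi], rfl⟩
  have hIJ : Disjoint I J := by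
    rw [Finset.disjoint_filter]
    exact fun i hi hv hu ↦
      not_adj_end_getVert_of_not_isHamiltonian hV hG hp (Finset.mem_range.1 hi) hu hv
  have hcard : #I + #J ≤ p.length := by
    rw [← Finset.card_union_of_disjoint hIJ, ← Finset.card_range p.length]
    exact Finset.card_le_card (Finset.union_subset (Finset.filter_subset _ _)
      (Finset.filter_subset _ _))
  have hv := (Finset.card_le_card hvI).trans Finset.card_image_le
  have hu := (Finset.card_le_card huJ).trans Finset.card_image_le
  rw [card_neighborFinset_eq_degree] at hu hv
  have := hp.length_eq
  omega

/-- A graph equal to its Bondy–Chvátal closure: no two non-adjacent vertices have degree sum at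
least the order of the graph. -/
def IsDegreeClosed (G : SimpleGraph V) [DecidableRel G.Adj] : Prop :=
  ∀ ⦃u v⦄, u ≠ v → ¬G.Adj u v → G.degree u + G.degree v < Fintype.card V

theorem isDegreeClosed_of_maximal_not_isHamiltonian [DecidableRel G.Adj]
    (hV : 3 ≤ Fintype.card V) (hG : Maximal (fun H : SimpleGraph V ↦ ¬H.IsHamiltonian) G) :
    IsDegreeClosed G := by
  intro u v huv hadj
  have : Nontrivial V := ⟨u, v, huv⟩
  have hlt : G < G ⊔ edge v u :=
    G.lt_sup_edge v u huv.symm fun h ↦ hadj h.symm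
  obtain ⟨p, hp⟩ := exists_isHamiltonian_walk_of_not_isHamiltonian hG.prop
    (not_not.1 (hG.not_prop_of_gt hlt))
  exact degree_add_degree_lt_of_isHamiltonian_walk hV hG.prop hp

end Hamiltonicity

section Toughness

open Finset

/-- A graph of toughness at least one: deleting `S` leaves at most `|S|` components whenever it
leaves more than one. Stated without a quotient, so that it also makes sense for complete graphs,
for which the infimum defining `toughness` is over the empty set. -/
def IsOneTough {V : Type*} (G : SimpleGraph V) : Prop :=
  ∀ S : Set V, 1 < numComp G S → numComp G S ≤ S.ncard

theorem isOneTough_of_one_le_toughness {V : Type*} {G : SimpleGraph V} (h : 1 ≤ toughness G) :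
    IsOneTough G := by
  intro S hS
  have hpos : (0 : ℝ) < numComp G S := by exact_mod_cast hS.trans' one_pos
  have hle : toughness G ≤ (S.ncard : ℝ) / numComp G S := by
    refine csInf_le ⟨0, ?_⟩ ⟨S, hS, rfl⟩
    rintro _ ⟨T, -, rfl⟩
    positivity
  exact_mod_cast (one_le_div₀ hpos).1 (h.trans hle)

theorem numComp_anti {V : Type*} [Finite V] {G H : SimpleGraph V} (h : G ≤ H) (S : Set V) :
    numComp H S ≤ numComp G S :=
  ConnectedComponent.card_le_card_of_le (comap_monotone _ h)

theorem IsOneTough.mono {V : Type*} [Finite V] {G H : SimpleGraph V} (hG : IsOneTough G)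
    (h : G ≤ H) : IsOneTough H := fun S hS ↦
  (numComp_anti h S).trans (hG S (hS.trans_le (numComp_anti h S)))

theorem ncard_image_compl_le_numComp {V α : Type*} [Finite V] {G : SimpleGraph V} {S : Set V}
    (c : V → α) (hc : ∀ ⦃v w⦄, v ∉ S → w ∉ S → G.Adj v w → c v = c w) :
    (c '' Sᶜ).ncard ≤ numComp G S := by
  have hwalk (v w : ↥Sᶜ) (p : (G.induce Sᶜ).Walk v w) : c v = c w := by
    induction p with
    | nil => rfl
    | @cons v w _ h _ ih => exact (hc v.2 w.2 h).trans ih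
  let f : (G.induce Sᶜ).ConnectedComponent → α :=
    ConnectedComponent.lift (fun v ↦ c v) fun v w p _ ↦ hwalk v w p
  have hf : c '' Sᶜ ⊆ f '' Set.univ := by
    rintro _ ⟨v, hv, rfl⟩
    exact ⟨connectedComponentMk _ ⟨v, hv⟩, trivial, rfl⟩
  rw [numComp, ← Set.ncard_univ]
  exact (Set.ncard_le_ncard hf (Set.toFinite _)).trans (Set.ncard_image_le (Set.toFinite _))

variable {V : Type*} [Fintype V] {G : SimpleGraph V} {U S : Finset V}

theorem IsOneTough.card_image_lt {α : Type*} [DecidableEq α] (hG : IsOneTough G) (f : V → α)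
    (hdisj : Disjoint U S) (hne : U.Nonempty)
    (hf : ∀ u ∈ U, ∀ v ∈ U, G.Adj u v → f u = f v)
    (hS : ∀ u ∈ U, ∀ v ∉ U, G.Adj u v → v ∈ S) (hcard : #U + #S < Fintype.card V) :
    #(U.image f) < #S := by
  classical
  obtain ⟨w, hw⟩ : ∃ w, w ∉ U ∪ S := by
    by_contra! hall
    rw [← card_union_of_disjoint hdisj, eq_univ_iff_forall.2 hall, card_univ] at hcard
    exact hcard.false
  rw [mem_union, not_or] at hw
  let c (v : V) : Option α := if v ∈ U then some (f v) else none
  have hc : ∀ ⦃v w⦄, v ∉ (S : Set V) → w ∉ (S : Set V) → G.Adj v w → c v = c w := by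
    intro v w hv hw h
    simp only [mem_coe] at hv hw
    by_cases hvU : v ∈ U <;> by_cases hwU : w ∈ U
    · simp [c, hvU, hwU, hf v hvU w hwU h]
    · exact absurd (hS v hvU w hwU h) hw
    · exact absurd (hS w hwU v hvU h.symm) hv
    · simp [c, hvU, hwU]
  have himage : ((U.image f).insertNone : Set (Option α)) ⊆ c '' (S : Set V)ᶜ := by
    rintro (_ | a) ha
    · exact ⟨w, hw.2, if_neg hw.1⟩
    · obtain ⟨u, hu, rfl⟩ := mem_image.1 (some_mem_insertNone.1 ha)
      exact ⟨u, disjoint_left.1 hdisj hu, if_pos hu⟩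
  have hcomp : #(U.image f) + 1 ≤ numComp G S := by
    rw [← card_insertNone, ← Set.ncard_coe_finset]
    exact (Set.ncard_le_ncard himage (Set.toFinite _)).trans (ncard_image_compl_le_numComp c hc)
  have hpos := (hne.image f).card_pos
  have := hG S (by omega)
  rw [Set.ncard_coe_finset] at this
  omega

theorem IsOneTough.card_lt_of_forall_adj_mem (hG : IsOneTough G) (hdisj : Disjoint U S)
    (hne : U.Nonempty) (hS : ∀ u ∈ U, ∀ v, G.Adj u v → v ∈ S)
    (hcard : #U + #S < Fintype.card V) : #U < #S := by
  classical
  simpa using hG.card_image_lt id hdisj hne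
    (fun u hu v hv h ↦ absurd (hS u hu v h) (disjoint_left.1 hdisj hv))
    (fun u hu v _ h ↦ hS u hu v h) hcard

theorem IsOneTough.one_lt_card (hG : IsOneTough G) (hdisj : Disjoint U S) (hne : U.Nonempty)
    (hS : ∀ u ∈ U, ∀ v ∉ U, G.Adj u v → v ∈ S) (hcard : #U + #S < Fintype.card V) :
    1 < #S := by
  classical
  simpa [image_const hne] using
    hG.card_image_lt (fun _ ↦ ()) hdisj hne (fun _ _ _ _ _ ↦ rfl) hS hcard

theorem IsOneTough.two_le_degree [DecidableRel G.Adj] (hG : IsOneTough G)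
    (hV : 3 ≤ Fintype.card V) (v : V) : 2 ≤ G.degree v := by
  classical
  by_contra! hlt
  have := hG.card_lt_of_forall_adj_mem (U := {v}) (S := G.neighborFinset v) (by simp) (by simp)
    (by simp) (by rw [card_singleton, card_neighborFinset_eq_degree]; omega)
  rw [card_singleton, card_neighborFinset_eq_degree] at this
  omega

end Toughness

section CliqueComplement

open Finset

variable {V : Type*} [Fintype V] {G : SimpleGraph V} {U : Finset V}

section Degree

variable [DecidableRel G.Adj]

theorem degree_add_card_add_one_of_isClique_compl (hK : G.IsClique (U : Set V)ᶜ) {w : V}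
    (hw : w ∉ U) : G.degree w + #U + 1 = Fintype.card V + #{v ∈ U | G.Adj v w} := by
  classical
  have hN : G.neighborFinset w = Uᶜ.erase w ∪ {v ∈ U | G.Adj v w} := by
    ext v
    by_cases hv : v ∈ U
    · simp [hv, G.adj_comm w v]
    · simp only [mem_neighborFinset, mem_union, mem_erase, mem_compl, hv, mem_filter]
      simpa using ⟨fun h ↦ h.ne', fun h ↦ hK hw hv (Ne.symm h)⟩
  have hdisj : Disjoint (Uᶜ.erase w) {v ∈ U | G.Adj v w} :=
    disjoint_compl_left.mono (erase_subset _ _) (filter_subset _ _)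
  have hpos : 0 < #Uᶜ := card_pos.2 ⟨w, mem_compl.2 hw⟩
  rw [← card_neighborFinset_eq_degree, hN, card_union_of_disjoint hdisj,
    card_erase_of_mem (mem_compl.2 hw), ← card_add_card_compl U]
  omega

theorem IsDegreeClosed.card_filter_adj_add_degree_le (hG : IsDegreeClosed G)
    (hK : G.IsClique (U : Set V)ᶜ) {u w : V} (hu : u ∈ U) (hw : w ∉ U) (huw : ¬G.Adj u w) :
    #{v ∈ U | G.Adj v w} + G.degree u ≤ #U := by
  classical
  have hlt := hG (ne_of_mem_of_not_mem hu hw) huw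
  have := degree_add_card_add_one_of_isClique_compl hK hw
  omega

theorem IsDegreeClosed.adj_of_degree_eq_card (hG : IsDegreeClosed G)
    (hK : G.IsClique (U : Set V)ᶜ) {u v w : V} (hu : u ∈ U) (hdeg : G.degree u = #U) (hv : v ∈ U)
    (hw : w ∉ U) (hvw : G.Adj v w) : G.Adj u w := by
  classical
  by_contra huw
  have hle := hG.card_filter_adj_add_degree_le hK hu hw huw
  have hpos : 0 < #{v ∈ U | G.Adj v w} := card_pos.2 ⟨v, mem_filter.2 ⟨hv, hvw⟩⟩
  omega

theorem IsDegreeClosed.exists_not_adj_adj_of_degree_eq_card (hT : IsOneTough G)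
    (hG : IsDegreeClosed G) (hK : G.IsClique (U : Set V)ᶜ) (hcard : 2 * #U < Fintype.card V)
    {u : V} (hu : u ∈ U) (hdeg : G.degree u = #U) :
    ∃ a ∈ U, ∃ b ∈ U, a ≠ u ∧ ¬G.Adj u a ∧ G.Adj a b := by
  classical
  -- Otherwise deleting the neighbours of `u` outside `U` leaves too many components: one for each
  -- vertex of `U` not adjacent to `u`, and one for the rest of the graph.
  by_contra! h
  have hS : #(G.neighborFinset u \ U) = #(U \ G.neighborFinset u) :=
    card_sdiff_comm (by rw [card_neighborFinset_eq_degree, hdeg])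
  let f (a : V) : V := if G.Adj u a then u else a
  have hf : ∀ a ∈ U, ∀ b ∈ U, G.Adj a b → f a = f b := by
    intro a ha b hb hab
    have hva := h a ha b hb
    have hvb := h b hb a ha
    have := hab.symm
    grind
  have himage : U \ G.neighborFinset u ⊆ U.image f := fun a ha ↦ by
    rw [mem_sdiff, mem_neighborFinset] at ha
    exact mem_image.2 ⟨a, ha.1, if_neg ha.2⟩
  have hlt := hT.card_image_lt (S := G.neighborFinset u \ U) f disjoint_sdiff ⟨u, hu⟩ hf
    (fun v hv w hw hvw ↦ mem_sdiff.2
      ⟨(mem_neighborFinset ..).2 (hG.adj_of_degree_eq_card hK hu hdeg hv hw hvw), hw⟩)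
    (by have := card_le_card (sdiff_subset : U \ G.neighborFinset u ⊆ U); omega)
  have := card_le_card himage
  omega

end Degree

theorem exists_ne_of_one_lt_card_union {α : Type*} [DecidableEq α] {A B : Finset α}
    (hA : A.Nonempty) (hB : B.Nonempty) (h : 1 < #(A ∪ B)) : ∃ a ∈ A, ∃ b ∈ B, a ≠ b := by
  obtain ⟨b, hb⟩ := hB
  obtain ⟨a, ha, hab⟩ := exists_mem_ne h b
  rcases mem_union.1 ha with haA | haB
  · exact ⟨a, haA, b, hb, hab⟩
  · obtain ⟨c, hc⟩ := hA
    rcases eq_or_ne c a with rfl | hca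
    · exact ⟨c, hc, b, hb, hab⟩
    · exact ⟨c, hc, a, haB, hca⟩

theorem exists_mem_neighborFinset_ne_of_not_adj [DecidableEq V] [DecidableRel G.Adj]
    (hT : IsOneTough G) (hV : 5 ≤ Fintype.card V) {u t : V} (hut : u ≠ t) (hadj : ¬G.Adj u t)
    (v : V) :
    ∃ a ∈ (G.neighborFinset u).erase v, ∃ b ∈ (G.neighborFinset t).erase v, a ≠ b := by
  have hunion : 2 < #(G.neighborFinset u ∪ G.neighborFinset t) := by
    by_contra! hle
    have hpair := card_pair hut
    have := hT.card_lt_of_forall_adj_mem (U := {u, t})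
      (S := G.neighborFinset u ∪ G.neighborFinset t)
      (by simp [hadj, G.adj_comm t u]) (insert_nonempty _ _)
      (by simp +contextual) (by omega)
    omega
  have hnonempty (w : V) : ((G.neighborFinset w).erase v).Nonempty := by
    have htwo : 1 < #(G.neighborFinset w) := by
      rw [card_neighborFinset_eq_degree]
      exact hT.two_le_degree (by omega) w
    obtain ⟨a, ha, hav⟩ := exists_mem_ne htwo v
    exact ⟨a, mem_erase.2 ⟨hav, ha⟩⟩
  refine exists_ne_of_one_lt_card_union (hnonempty u) (hnonempty t) ?_
  rw [← erase_union_distrib]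
  have := pred_card_le_card_erase (s := G.neighborFinset u ∪ G.neighborFinset t) (a := v)
  omega

theorem isHamiltonian_of_compl_path [DecidableEq V] (hT : IsOneTough G) (hV : 5 ≤ Fintype.card V)
    {u v t : V} (hK : G.IsClique {u, v, t}ᶜ) (huv : G.Adj u v) (hvt : G.Adj v t) (hut : u ≠ t)
    (hadj : ¬G.Adj u t) : G.IsHamiltonian := by
  classical
  obtain ⟨a, ha, b, hb, hab⟩ := exists_mem_neighborFinset_ne_of_not_adj hT hV hut hadj v
  simp only [mem_erase, mem_neighborFinset] at ha hb
  have haC : a ∉ ({u, v, t} : Set V) := by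
    rintro (rfl | rfl | rfl)
    exacts [ha.2.ne rfl, ha.1 rfl, hadj ha.2]
  have hbC : b ∉ ({u, v, t} : Set V) := by
    rintro (rfl | rfl | rfl)
    exacts [hadj hb.2.symm, hb.1 rfl, hb.2.ne rfl]
  refine isHamiltonian_of_isChain_of_isClique (l := [a, u, v, t, b]) (by omega) hK (by simp) ?_ ?_
    (fun w hw ↦ by rcases not_not.1 hw with rfl | rfl | rfl <;> simp) haC hbC
  · have := huv.ne
    have := hvt.ne
    grind
  · simp [ha.2.symm, huv, hvt, hb.2]

theorem isHamiltonian_of_compl_edge_of_adj [DecidableEq V] (hV : 3 ≤ Fintype.card V)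
    {u v t x y a b : V} (hK : G.IsClique {u, v, t}ᶜ) (hvt : G.Adj v t) (hxv : G.Adj x v)
    (hty : G.Adj t y) (hau : G.Adj a u) (hub : G.Adj u b) (hxy : x ≠ y) (hab : a ≠ b)
    (hux : ¬G.Adj u x) (huy : ¬G.Adj u y) (hx : x ∉ ({u, v, t} : Set V))
    (hy : y ∉ ({u, v, t} : Set V)) (ha : a ∉ ({u, v, t} : Set V)) (hb : b ∉ ({u, v, t} : Set V)) :
    G.IsHamiltonian := by
  have hya : G.Adj y a := hK hy ha fun h ↦ huy (h ▸ hau.symm)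
  refine isHamiltonian_of_isChain_of_isClique (l := [x, v, t, y, a, u, b]) hV hK (by simp)
    ?_ ?_ (fun w hw ↦ by rcases not_not.1 hw with rfl | rfl | rfl <;> simp) hx hb
  · have := hvt.ne
    have := hau.symm
    have := hxv.symm
    grind
  · simp [hxv, hvt, hty, hya, hau, hub]

section Degree

variable [DecidableRel G.Adj]

theorem IsDegreeClosed.degree_lt_card_of_forall_not_adj (hT : IsOneTough G)
    (hG : IsDegreeClosed G) (hK : G.IsClique (U : Set V)ᶜ) (hcard : 2 * #U < Fintype.card V)
    {u : V} (hu : u ∈ U) (hdeg : G.degree u ≤ #U)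
    (h : ∀ a ∈ U, ∀ b ∈ U, a ≠ u → G.Adj a b → G.Adj u a) : G.degree u < #U := by
  classical
  refine hdeg.lt_of_ne fun heq ↦ ?_
  obtain ⟨a, ha, b, hb, hau, hua, hab⟩ :=
    hG.exists_not_adj_adj_of_degree_eq_card hT hK hcard hu heq
  exact hua (h a ha b hb hau hab)

theorem IsDegreeClosed.not_isClique_of_isClique_compl (hT : IsOneTough G) (hG : IsDegreeClosed G)
    (hK : G.IsClique (U : Set V)ᶜ) (hcard : 2 * #U < Fintype.card V) (hne : U.Nonempty)
    (hdeg : ∀ u ∈ U, G.degree u ≤ #U) : ¬G.IsClique U := by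
  classical
  intro hU
  have hboundary : ∀ u ∈ U, ∀ w ∉ U, ¬G.Adj u w := by
    intro u hu w hw huw
    have hlt := hG.degree_lt_card_of_forall_not_adj hT hK hcard hu (hdeg u hu)
      fun a ha _ _ hau _ ↦ hU hu ha hau.symm
    have hsub : insert w (U.erase u) ⊆ G.neighborFinset u := by
      refine insert_subset ((mem_neighborFinset ..).2 huw) fun v hv ↦ ?_
      exact (mem_neighborFinset ..).2 (hU hu (mem_of_mem_erase hv) (ne_of_mem_erase hv).symm)
    have hle := card_le_card hsub
    rw [card_insert_of_notMem (mt mem_of_mem_erase hw), card_neighborFinset_eq_degree,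
      card_erase_add_one hu] at hle
    omega
  have := hT.one_lt_card (S := ∅) (disjoint_empty_right U) hne
    (fun u hu w hw huw ↦ absurd huw (hboundary u hu w hw)) (by rw [card_empty]; omega)
  simp at this

theorem IsDegreeClosed.three_le_card_of_isClique_compl (hT : IsOneTough G) (hG : IsDegreeClosed G)
    (hK : G.IsClique (U : Set V)ᶜ) (hV : 5 ≤ Fintype.card V) (hne : U.Nonempty)
    (hdeg : ∀ u ∈ U, G.degree u ≤ #U) : 3 ≤ #U := by
  classical
  by_contra! hlt
  have hcard : 2 * #U < Fintype.card V := by omega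
  refine hG.not_isClique_of_isClique_compl hT hK hcard hne hdeg fun u hu v hv huv ↦ ?_
  by_contra hadj
  have hU : {u, v} = U := eq_of_subset_of_card_le (insert_subset hu (singleton_subset_iff.2 hv))
    (by rw [card_pair huv]; omega)
  have hlt := hG.degree_lt_card_of_forall_not_adj hT hK hcard hu (hdeg u hu) (by
    have := G.adj_comm u v
    simp only [← hU, mem_insert, mem_singleton]
    rintro a (rfl | rfl) b (rfl | rfl) <;> simp_all)
  have := hT.two_le_degree (by omega) u
  omega

theorem IsDegreeClosed.adj_of_adj_of_adj (hT : IsOneTough G) (hG : IsDegreeClosed G)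
    (hK : G.IsClique (U : Set V)ᶜ) (hV : 3 ≤ Fintype.card V) (hU : #U = 3) {u v t w : V}
    (hu : u ∈ U) (hv : v ∈ U) (huv : u ≠ v) (ht : t ∈ U) (hw : w ∉ U) (huw : G.Adj u w)
    (hvw : G.Adj v w) : G.Adj t w := by
  classical
  by_contra htw
  have hle := hG.card_filter_adj_add_degree_le hK ht hw htw
  have hsub : {u, v} ⊆ {x ∈ U | G.Adj x w} := by simp [insert_subset_iff, *]
  have htwo := card_le_card hsub
  rw [card_pair huv] at htwo
  have := hT.two_le_degree hV t
  omega

theorem exists_forall_adj_iff_of_degree_eq_two {v t : V} (hv : G.degree v = 2)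
    (h : G.Adj v t) : ∃ x, x ≠ t ∧ ∀ w, G.Adj v w ↔ w = t ∨ w = x := by
  classical
  obtain ⟨a, b, hab, hN⟩ := card_eq_two.1 ((card_neighborFinset_eq_degree G v).trans hv)
  have hadj (w : V) : G.Adj v w ↔ w = a ∨ w = b := by
    rw [← mem_neighborFinset, hN, mem_insert, mem_singleton]
  rcases (hadj t).1 h with rfl | rfl
  · exact ⟨b, hab.symm, hadj⟩
  · exact ⟨a, hab, fun w ↦ (hadj w).trans or_comm⟩

theorem IsDegreeClosed.degree_eq_two_of_compl_edge (hT : IsOneTough G) (hG : IsDegreeClosed G)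
    (hV : 7 ≤ Fintype.card V) {u v t : V} (hK : G.IsClique {u, v, t}ᶜ) (huv : u ≠ v)
    (hut : u ≠ t) (hvt : G.Adj v t) (huv' : ¬G.Adj u v) (hut' : ¬G.Adj u t)
    (hdeg : G.degree v ≤ 3) : G.degree v = 2 := by
  classical
  have hU : #({u, v, t} : Finset V) = 3 := card_eq_three.2 ⟨u, v, t, huv, hut, hvt.ne, rfl⟩
  have hends : ∀ a ∈ ({u, v, t} : Finset V), ∀ b ∈ ({u, v, t} : Finset V), a ≠ v → G.Adj a b →
      G.Adj v a := by
    simp only [mem_insert, mem_singleton]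
    rintro a (rfl | rfl | rfl) b (rfl | rfl | rfl) hav hab <;> simp_all
  have hlt : G.degree v < 3 := hU ▸ hG.degree_lt_card_of_forall_not_adj hT (by simpa using hK)
    (by omega) (by simp) (hU ▸ hdeg) hends
  exact (Nat.le_of_lt_succ hlt).antisymm (hT.two_le_degree (by omega) v)

theorem IsDegreeClosed.exists_notMem_forall_adj_iff_of_compl_edge (hT : IsOneTough G)
    (hG : IsDegreeClosed G) (hV : 7 ≤ Fintype.card V) {u v t : V} (hK : G.IsClique {u, v, t}ᶜ)
    (huv : u ≠ v) (hut : u ≠ t) (hvt : G.Adj v t) (huv' : ¬G.Adj u v) (hut' : ¬G.Adj u t)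
    (hdeg : G.degree v ≤ 3) : ∃ x ∉ ({u, v, t} : Set V), ∀ w, G.Adj v w ↔ w = t ∨ w = x := by
  obtain ⟨x, hxt, hx⟩ := exists_forall_adj_iff_of_degree_eq_two
    (hG.degree_eq_two_of_compl_edge hT hV hK huv hut hvt huv' hut' hdeg) hvt
  have hvx : G.Adj v x := (hx x).2 (.inr rfl)
  refine ⟨x, ?_, hx⟩
  rintro (rfl | rfl | rfl)
  exacts [huv' hvx.symm, hvx.ne rfl, hxt rfl]

theorem IsDegreeClosed.isHamiltonian_of_compl_edge [DecidableEq V] (hT : IsOneTough G)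
    (hG : IsDegreeClosed G) (hV : 7 ≤ Fintype.card V) {u v t : V} (hK : G.IsClique {u, v, t}ᶜ)
    (huv : u ≠ v) (hut : u ≠ t) (hvt : G.Adj v t) (huv' : ¬G.Adj u v) (hut' : ¬G.Adj u t)
    (hdegv : G.degree v ≤ 3) (hdegt : G.degree t ≤ 3) : G.IsHamiltonian := by
  have hU : #({u, v, t} : Finset V) = 3 := card_eq_three.2 ⟨u, v, t, huv, hut, hvt.ne, rfl⟩
  have hK' : G.IsClique (({u, v, t} : Finset V) : Set V)ᶜ := by simpa using hK
  obtain ⟨x, hxU, hx⟩ :=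
    hG.exists_notMem_forall_adj_iff_of_compl_edge hT hV hK huv hut hvt huv' hut' hdegv
  obtain ⟨y, hyU, hy⟩ := hG.exists_notMem_forall_adj_iff_of_compl_edge hT hV
    (Set.pair_comm v t ▸ hK) hut huv hvt.symm hut' huv' hdegt
  rw [Set.pair_comm] at hyU
  have hvx : G.Adj v x := (hx x).2 (.inr rfl)
  have hty : G.Adj t y := (hy y).2 (.inr rfl)
  have hNu {w : V} (hw : G.Adj u w) : w ∉ ({u, v, t} : Set V) := by
    rintro (rfl | rfl | rfl)
    exacts [hw.ne rfl, huv' hw, hut' hw]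
  have hxy : x ≠ y := by
    rintro rfl
    have := hT.one_lt_card (U := {v, t}) (S := {x}) (by simp_all) (insert_nonempty _ _)
      (by simp; grind) (by rw [card_singleton, card_pair hvt.ne]; omega)
    simp at this
  have hux : ¬G.Adj u x := fun h ↦ by
    have := hG.adj_of_adj_of_adj hT hK' (by omega) hU (t := t) (by simp) (by simp) huv (by simp)
      (by simpa using hxU) h hvx
    exact ((hy x).1 this).elim hvx.ne' hxy
  have huy : ¬G.Adj u y := fun h ↦ by
    have := hG.adj_of_adj_of_adj hT hK' (by omega) hU (t := v) (by simp) (by simp) hut (by simp)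
      (by simpa using hyU) h hty
    exact ((hx y).1 this).elim hty.ne' hxy.symm
  obtain ⟨a, ha, b, hb, hab⟩ := one_lt_card.1
    ((hT.two_le_degree (by omega) u).trans_eq (card_neighborFinset_eq_degree G u).symm)
  rw [mem_neighborFinset] at ha hb
  exact isHamiltonian_of_compl_edge_of_adj (by omega) hK hvt hvx.symm hty ha.symm hb hxy hab hux huy
    hxU hyU (hNu ha) (hNu hb)

end Degree

end CliqueComplement

section IndependentTriple

open Finset

variable {V : Type*} [Fintype V] {G : SimpleGraph V}

theorem isHamiltonian_of_disjoint_pairs [DecidableEq V] (hV : 3 ≤ Fintype.card V)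
    {u a b : Fin 3 → V} (hK : G.IsClique (Set.range u)ᶜ) (hau : ∀ i, G.Adj (a i) (u i))
    (hub : ∀ i, G.Adj (u i) (b i)) (ha : ∀ i, a i ∉ Set.range u) (hb : ∀ i, b i ∉ Set.range u)
    (hu : u.Injective) (hainj : a.Injective) (hbinj : b.Injective) (hab : ∀ i j, a i ≠ b j) :
    G.IsHamiltonian := by
  have hba (i j : Fin 3) : G.Adj (b i) (a j) := hK (hb i) (ha j) (hab j i).symm
  have hne {i j : Fin 3} (h : i ≠ j) : u i ≠ u j ∧ a i ≠ a j ∧ b i ≠ b j :=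
    ⟨hu.ne h, hainj.ne h, hbinj.ne h⟩
  have hua (i j : Fin 3) : a i ≠ u j := fun h ↦ ha i ⟨j, h.symm⟩
  have hubne (i j : Fin 3) : b i ≠ u j := fun h ↦ hb i ⟨j, h.symm⟩
  refine isHamiltonian_of_isChain_of_isClique
    (l := (List.finRange 3).flatMap fun i ↦ [a i, u i, b i]) hV hK (by simp [List.finRange_succ])
    ?_ ?_ ?_ ?_ ?_
  · rw [List.nodup_flatMap]
    refine ⟨fun i _ ↦ by simp [hua, hab, (hubne i i).symm], ?_⟩
    refine (List.nodup_finRange 3).imp_of_mem fun {i j} _ _ hij ↦ ?_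
    have := hne hij
    simp only [Function.onFun, List.disjoint_left]
    grind
  · simp [List.finRange_succ, hau, hub, hba]
  · intro w hw
    obtain ⟨i, rfl⟩ := not_not.1 hw
    exact List.mem_flatMap.2 ⟨i, List.mem_finRange i, by simp⟩
  · simpa [List.finRange_succ] using ha 0
  · simpa [List.finRange_succ] using hb 2

theorem exists_equiv_fin_extending {k m : ℕ} {z : Fin k → V} {u : Fin m → V} (hz : z.Injective)
    (hu : u.Injective) (hzu : ∀ j i, z j ≠ u i) : ∃ e : V ≃ Fin (Fintype.card V),
      (∀ j, (e (z j) : ℕ) = j) ∧ ∀ i, (e (u i) : ℕ) = Fintype.card V - m + i := by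
  have hinj : (Sum.elim z u).Injective := hz.sumElim hu hzu
  have hcard : k + m ≤ Fintype.card V := by simpa using Fintype.card_le_of_injective _ hinj
  let idx : Fin k ⊕ Fin m → Fin (Fintype.card V) :=
    Sum.elim (Fin.castLE (by omega)) fun i ↦ ⟨Fintype.card V - m + i, by omega⟩
  have hidx : idx.Injective := by
    refine (Fin.castLE_injective _).sumElim (fun i j h ↦ ?_) fun j i ↦ ?_
    · simpa [Fin.ext_iff] using h
    · simp only [Ne, Fin.ext_iff, Fin.val_castLE]
      omega
  obtain ⟨σ, hσ⟩ := Equiv.Perm.exists_extending_pair (Fintype.equivFin V ∘ Sum.elim z u) idx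
    ((Equiv.injective _).comp hinj) hidx
  exact ⟨(Fintype.equivFin V).trans σ, fun j ↦ congrArg Fin.val (hσ (.inl j)),
    fun i ↦ congrArg Fin.val (hσ (.inr i))⟩

theorem nonempty_iso_Mn {z : Fin 4 → V} {u : Fin 3 → V} (hK : G.IsClique (Set.range u)ᶜ)
    (hz : z.Injective) (hu : u.Injective) (hzu : ∀ j i, z j ≠ u i)
    (hadj : ∀ i w, G.Adj (u i) w ↔ w = z 0 ∨ w = z i.succ) :
    Nonempty (G ≃g Mn (Fintype.card V)) := by
  obtain ⟨e, hez, heu⟩ := exists_equiv_fin_extending hz hu hzu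
  replace hez (j : Fin 4) (w : V) : (e w : ℕ) = j ↔ w = z j := by
    rw [← hez, Fin.val_inj, e.apply_eq_iff_eq]
  have hge (w : V) : Fintype.card V - 3 ≤ (e w : ℕ) ↔ w ∈ Set.range u := by
    refine ⟨fun h ↦ ⟨⟨e w - (Fintype.card V - 3), by omega⟩, e.injective (Fin.ext ?_)⟩, ?_⟩
    · rw [heu]
      exact Nat.add_sub_of_le h
    · rintro ⟨i, rfl⟩
      rw [heu]
      omega
  have hrow (v w : V) : (Fintype.card V - 3 ≤ (e v : ℕ) ∧
      ((e w : ℕ) = 0 ∨ (e w : ℕ) = e v - (Fintype.card V - 3) + 1)) ↔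
      v ∈ Set.range u ∧ G.Adj v w := by
    rw [hge]
    refine and_congr_right ?_
    rintro ⟨i, rfl⟩
    rw [hadj, ← hez, ← hez, heu, Nat.add_sub_cancel_left, Fin.val_succ, Fin.val_zero]
  refine ⟨⟨e, fun {v w} ↦ ?_⟩⟩
  rw [Mn, fromRel_adj, hrow, hrow, ← not_le, ← not_le, hge, hge, e.injective.ne_iff,
    G.adj_comm w v]
  have hclique : v ∉ Set.range u → w ∉ Set.range u → v ≠ w → G.Adj v w := fun hv hw ↦ hK hv hw
  have hne : G.Adj v w → v ≠ w := Adj.ne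
  tauto

variable [DecidableRel G.Adj] {u : Fin 3 → V}

theorem isHamiltonian_of_pairwise_disjoint_neighborFinset [DecidableEq V] (hV : 3 ≤ Fintype.card V)
    (hK : G.IsClique (Set.range u)ᶜ) (hu : u.Injective) (hind : ∀ i j, ¬G.Adj (u i) (u j))
    (hdeg : ∀ i, 2 ≤ G.degree (u i))
    (hdisj : Pairwise fun i j ↦ Disjoint (G.neighborFinset (u i)) (G.neighborFinset (u j))) :
    G.IsHamiltonian := by
  have hpair (i : Fin 3) : ∃ a b, G.Adj (u i) a ∧ G.Adj (u i) b ∧ a ≠ b := by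
    obtain ⟨a, ha, b, hb, hab⟩ := one_lt_card.1
      ((hdeg i).trans_eq (card_neighborFinset_eq_degree G (u i)).symm)
    exact ⟨a, b, by simpa using ha, by simpa using hb, hab⟩
  choose a b ha hb hab using hpair
  have hmem {i : Fin 3} {w : V} (h : G.Adj (u i) w) : w ∉ Set.range u := by
    rintro ⟨j, rfl⟩
    exact hind i j h
  have heq {i j : Fin 3} {w : V} (hi : G.Adj (u i) w) (hj : G.Adj (u j) w) : i = j := by
    by_contra hij
    exact disjoint_left.1 (hdisj hij) ((mem_neighborFinset ..).2 hi) ((mem_neighborFinset ..).2 hj)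
  refine isHamiltonian_of_disjoint_pairs hV hK (fun i ↦ (ha i).symm) hb (fun i ↦ hmem (ha i))
    (fun i ↦ hmem (hb i)) hu (fun i j h ↦ heq (ha i) (h ▸ ha j)) (fun i j h ↦ heq (hb i) (h ▸ hb j))
    fun i j h ↦ ?_
  obtain rfl := heq (ha i) (h ▸ hb j)
  exact hab i h

theorem nonempty_iso_Mn_of_common_neighbor (hT : IsOneTough G) (hV : 5 ≤ Fintype.card V)
    (hK : G.IsClique (Set.range u)ᶜ) (hu : u.Injective) (hind : ∀ i j, ¬G.Adj (u i) (u j))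
    (hdeg : ∀ i, G.degree (u i) = 2) {x : V} (hx : ∀ i, G.Adj (u i) x) :
    Nonempty (G ≃g Mn (Fintype.card V)) := by
  classical
  choose y hyx hy using fun i ↦ exists_forall_adj_iff_of_degree_eq_two (hdeg i) (hx i)
  have hyinj : y.Injective := by
    intro i j hij
    by_contra hne
    have hpair := card_pair (hu.ne hne)
    have := hT.card_lt_of_forall_adj_mem (U := {u i, u j}) (S := {x, y i})
      (by have := hind i i; have := hind i j; have := hind j j; have := hind j i; simp; grind)
      (insert_nonempty _ _)
      (by simp [hy, hij])
      (by have := card_le_two (a := x) (b := y i); omega)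
    have := card_le_two (a := x) (b := y i)
    omega
  refine nonempty_iso_Mn (z := Fin.cons x y) hK (Fin.cons_injective_iff.2 ⟨?_, hyinj⟩) hu ?_ ?_
  · rintro ⟨i, hi⟩
    exact hyx i hi
  · refine Fin.cases (fun i h ↦ hind 0 i (h ▸ hx 0)) fun j i h ↦ hind j i ((hy j _).2 (.inr h.symm))
  · simpa using hy

theorem IsDegreeClosed.isHamiltonian_or_nonempty_iso_Mn_of_forall_not_adj [DecidableEq V]
    (hT : IsOneTough G) (hG : IsDegreeClosed G) (hV : 7 ≤ Fintype.card V)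
    (hK : G.IsClique (Set.range u)ᶜ) (hu : u.Injective) (hind : ∀ i j, ¬G.Adj (u i) (u j))
    (hdeg : ∀ i, G.degree (u i) ≤ 3) :
    G.IsHamiltonian ∨ Nonempty (G ≃g Mn (Fintype.card V)) := by
  have hU : #(univ.image u) = 3 := by simp [card_image_of_injective _ hu]
  have hK' : G.IsClique (univ.image u : Set V)ᶜ := by simpa using hK
  have hmem (i : Fin 3) : u i ∈ univ.image u := mem_image_of_mem u (mem_univ i)
  have hmin := hT.two_le_degree (by omega)
  have hdeg' (i : Fin 3) : G.degree (u i) = 2 := by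
    have hlt := hG.degree_lt_card_of_forall_not_adj hT hK' (by omega) (hmem i)
      (hU.symm ▸ hdeg i) (by simp [hind])
    have := hmin (u i)
    omega
  by_cases hx : ∃ x, ∀ i, G.Adj (u i) x
  · obtain ⟨x, hx⟩ := hx
    exact .inr (nonempty_iso_Mn_of_common_neighbor hT (by omega) hK hu hind hdeg' hx)
  · refine .inl (isHamiltonian_of_pairwise_disjoint_neighborFinset (by omega) hK hu hind
      (fun i ↦ hmin (u i)) fun i j hij ↦ disjoint_left.2 fun w hi hj ↦ hx ⟨w, fun k ↦ ?_⟩)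
    rw [mem_neighborFinset] at hi hj
    have hw : w ∉ univ.image u := by
      simp only [mem_image, mem_univ, true_and, not_exists]
      rintro k rfl
      exact hind i k hi
    exact hG.adj_of_adj_of_adj hT hK' (by omega) hU (hmem i) (hmem j) (hu.ne hij) (hmem k) hw hi hj

theorem IsDegreeClosed.isHamiltonian_of_compl_triple_of_adj [DecidableEq V] (hT : IsOneTough G)
    (hG : IsDegreeClosed G) (hV : 7 ≤ Fintype.card V) {u v t : V} (hK : G.IsClique {u, v, t}ᶜ)
    (huv : u ≠ v) (hut : u ≠ t) (hvt : G.Adj v t)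
    (hdeg : ∀ w ∈ ({u, v, t} : Finset V), G.degree w ≤ 3) : G.IsHamiltonian := by
  have hU : #({u, v, t} : Finset V) = 3 := card_eq_three.2 ⟨u, v, t, huv, hut, hvt.ne, rfl⟩
  by_cases hadjv : G.Adj u v <;> by_cases hadjt : G.Adj u t
  · refine absurd ?_ (hG.not_isClique_of_isClique_compl hT (U := {u, v, t}) (by simpa using hK)
      (by omega) (insert_nonempty _ _) (hU ▸ hdeg))
    simp [hadjv, hadjt, hvt]
  · exact isHamiltonian_of_compl_path hT (by omega) hK hadjv hvt hut hadjt
  · exact isHamiltonian_of_compl_path hT (by omega) (Set.pair_comm v t ▸ hK) hadjt hvt.symm huv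
      hadjv
  · exact hG.isHamiltonian_of_compl_edge hT hV hK huv hut hvt hadjv hadjt (hdeg v (by simp))
      (hdeg t (by simp))

theorem IsDegreeClosed.isHamiltonian_or_nonempty_iso_Mn_of_card_eq_three [DecidableEq V]
    (hT : IsOneTough G) (hG : IsDegreeClosed G) (hV : 7 ≤ Fintype.card V) {U : Finset V}
    (hK : G.IsClique (U : Set V)ᶜ) (hU : #U = 3) (hdeg : ∀ u ∈ U, G.degree u ≤ #U) :
    G.IsHamiltonian ∨ Nonempty (G ≃g Mn (Fintype.card V)) := by
  by_cases hind : ∃ v ∈ U, ∃ t ∈ U, G.Adj v t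
  · obtain ⟨v, hv, t, ht, hvt⟩ := hind
    obtain ⟨u, hu, huv, hut⟩ : ∃ u ∈ U, u ≠ v ∧ u ≠ t := by
      obtain ⟨u, hu, hnot⟩ := exists_mem_notMem_of_card_lt_card (s := {v, t}) (t := U)
        (by rw [card_pair hvt.ne]; omega)
      exact ⟨u, hu, by simpa using hnot⟩
    obtain rfl : {u, v, t} = U := eq_of_subset_of_card_le (by simp [insert_subset_iff, *])
      (by rw [hU, card_eq_three.2 ⟨u, v, t, huv, hut, hvt.ne, rfl⟩])
    exact .inl (hG.isHamiltonian_of_compl_triple_of_adj hT hV (by simpa using hK) huv hut hvt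
      (hU ▸ hdeg))
  · push Not at hind
    let e := (U.equivFinOfCardEq hU).symm
    have hrange : Set.range (fun i ↦ (e i : V)) = U :=
      (e.surjective.range_comp ((↑) : U → V)).trans Subtype.range_coe
    exact hG.isHamiltonian_or_nonempty_iso_Mn_of_forall_not_adj (u := fun i ↦ (e i : V)) hT hV
      (by rwa [hrange]) (Subtype.val_injective.comp e.injective)
      (fun i j ↦ hind _ (e i).2 _ (e j).2) fun i ↦ (hdeg _ (e i).2).trans_eq hU

end IndependentTriple

section Counting

open Finset

variable {V : Type*} [Fintype V] {G : SimpleGraph V} [DecidableRel G.Adj]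

theorem lt_sum_degree_of_sub_four_lt_specRad {d : ℕ} (h4 : 4 ≤ Fintype.card V)
    (hd : d + 3 ≤ Fintype.card V) (hmin : ∀ v, d ≤ G.degree v)
    (hρ : (Fintype.card V : ℝ) - 4 < specRad G) :
    ((Fintype.card V : ℤ) - 3) * (Fintype.card V - 4) + 3 * d < ∑ v, (G.degree v : ℤ) := by
  have : Nonempty V := Fintype.card_pos_iff.1 (by omega)
  have hle := specRad_sq_sub_le hmin
  have h4' : (4 : ℝ) ≤ Fintype.card V := by exact_mod_cast h4
  have hd' : (d : ℝ) + 3 ≤ Fintype.card V := by exact_mod_cast hd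
  have hlt : ((Fintype.card V : ℝ) - 4) * (Fintype.card V - 3 - d) <
      specRad G ^ 2 - (d - 1) * specRad G := by
    nlinarith [mul_pos (sub_pos.2 hρ) (by linarith : 0 < specRad G + (Fintype.card V - 3 - d))]
  have : ((Fintype.card V : ℝ) - 3) * (Fintype.card V - 4) + 3 * d < ∑ v, (G.degree v : ℝ) := by
    linarith
  exact_mod_cast this

variable {U : Finset V}

theorem IsDegreeClosed.exists_isClique_compl (hG : IsDegreeClosed G) :
    ∃ U : Finset V, G.IsClique (U : Set V)ᶜ ∧
      ∀ u ∈ U, G.degree u ≤ #U ∧ 2 * G.degree u + 1 ≤ Fintype.card V := by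
  classical
  have hlarge : G.IsClique ({v | Fintype.card V ≤ 2 * G.degree v} : Finset V) := by
    intro u hu v hv huv
    by_contra hadj
    have := hG huv hadj
    simp only [coe_filter_univ, Set.mem_ofPred_eq] at hu hv
    omega
  obtain ⟨C, hlargeC, hC⟩ := Finite.exists_le_maximal (p := fun C : Finset V ↦ G.IsClique C) hlarge
  have hK : G.IsClique ((Cᶜ : Finset V) : Set V)ᶜ := by simpa using hC.prop
  refine ⟨Cᶜ, hK, fun u hu ↦ ⟨?_, ?_⟩⟩
  · rw [mem_compl] at hu
    obtain ⟨w, hw, huw⟩ : ∃ w ∈ C, ¬G.Adj u w := by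
      by_contra! hall
      have hinsert : G.IsClique (insert u C : Finset V) := by
        rw [coe_insert]
        exact hC.prop.insert fun w hw _ ↦ hall w hw
      exact hu (hC.le_of_ge hinsert (subset_insert u C) (mem_insert_self u C))
    have hlt := hG (ne_of_mem_of_not_mem hw hu).symm huw
    have := degree_add_card_add_one_of_isClique_compl hK (w := w) (by simpa using hw)
    omega
  · by_contra! hlt
    exact mem_compl.1 hu (hlargeC (by simp; omega))

theorem sum_degree_compl_add_card_le_of_isClique_compl [DecidableEq V]
    (hK : G.IsClique (U : Set V)ᶜ) :
    ∑ w ∈ Uᶜ, G.degree w + #Uᶜ ≤ #Uᶜ * #Uᶜ + ∑ u ∈ U, G.degree u := by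
  have hcross : ∑ w ∈ Uᶜ, #{v ∈ U | G.Adj v w} ≤ ∑ u ∈ U, G.degree u := by
    have hcount := sum_card_bipartiteAbove_eq_sum_card_bipartiteBelow (s := U) (t := Uᶜ) G.Adj
    refine hcount.symm.trans_le (sum_le_sum fun u _ ↦ ?_)
    rw [← card_neighborFinset_eq_degree]
    exact card_le_card fun w hw ↦ (mem_neighborFinset ..).2 (mem_filter.1 hw).2
  have hdeg : ∀ w ∈ Uᶜ, G.degree w + 1 = #Uᶜ + #{v ∈ U | G.Adj v w} := by
    intro w hw
    have := degree_add_card_add_one_of_isClique_compl hK (mem_compl.1 hw)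
    have := card_add_card_compl U
    omega
  calc ∑ w ∈ Uᶜ, G.degree w + #Uᶜ = ∑ w ∈ Uᶜ, (G.degree w + 1) := by
        rw [sum_add_distrib, card_eq_sum_ones]
    _ = #Uᶜ * #Uᶜ + ∑ w ∈ Uᶜ, #{v ∈ U | G.Adj v w} := by
        rw [sum_congr rfl hdeg, sum_add_distrib, sum_const, smul_eq_mul]
    _ ≤ #Uᶜ * #Uᶜ + ∑ u ∈ U, G.degree u := by gcongr

theorem sum_degree_add_card_le_of_isClique_compl [DecidableEq V] (hK : G.IsClique (U : Set V)ᶜ)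
    {m : ℕ} (hm : ∀ v ∈ U, G.degree v ≤ m) {u : V} (hu : u ∈ U) :
    ∑ v, G.degree v + #Uᶜ ≤ #Uᶜ * #Uᶜ + 2 * (G.degree u + (#U - 1) * m) := by
  have hU : ∑ v ∈ U, G.degree v ≤ G.degree u + (#U - 1) * m := by
    rw [← add_sum_erase U _ hu, ← card_erase_of_mem hu]
    gcongr
    exact sum_le_card_nsmul _ _ _ fun v hv ↦ hm v (mem_of_mem_erase hv)
  have hcompl := sum_degree_compl_add_card_le_of_isClique_compl hK
  have hsum := sum_add_sum_compl U fun v ↦ G.degree v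
  omega

theorem card_lt_twelve_of_sub_four_lt_specRad (hV : 5 ≤ Fintype.card V)
    (hmin : ∀ v, 2 ≤ G.degree v) (hρ : (Fintype.card V : ℝ) - 4 < specRad G)
    (hdeg : ∀ u ∈ U, 2 * G.degree u + 1 ≤ Fintype.card V) : #U < 12 := by
  classical
  have hlow := lt_sum_degree_of_sub_four_lt_specRad (by omega) hV hmin hρ
  have hcompl : ∑ v ∈ Uᶜ, (G.degree v : ℤ) ≤ #Uᶜ • ((Fintype.card V : ℤ) - 1) :=
    sum_le_card_nsmul _ _ _ fun v _ ↦ by have := G.degree_lt_card_verts v; omega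
  have hU : ∑ u ∈ U, 2 * (G.degree u : ℤ) ≤ #U • ((Fintype.card V : ℤ) - 1) :=
    sum_le_card_nsmul _ _ _ fun u hu ↦ by have := hdeg u hu; omega
  have hcard : (#U : ℤ) + #Uᶜ = Fintype.card V := by exact_mod_cast card_add_card_compl U
  rw [← mul_sum] at hU
  rw [← sum_add_sum_compl U] at hlow
  rw [nsmul_eq_mul] at hcompl hU
  rw [eq_sub_of_add_eq' hcard] at hcompl
  by_contra! hge
  have hge' : (12 : ℤ) ≤ #U := by exact_mod_cast hge
  have hV' : (5 : ℤ) ≤ Fintype.card V := by exact_mod_cast hV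
  push_cast at hlow
  nlinarith [hge', hV']

theorem sub_three_mul_add_four_add_le {n s m : ℤ} (hn : 18 ≤ n) (h4 : 4 ≤ s) (h12 : s < 12)
    (hms : m ≤ s) (hmn : 2 * m + 1 ≤ n) :
    (s - 3) * (s + 4) + 2 * (s - 1) * m ≤ 2 * (s - 3) * n := by
  interval_cases s <;> omega

theorem card_le_three_of_sub_four_lt_specRad (hV : 18 ≤ Fintype.card V)
    (hmin : ∀ v, 2 ≤ G.degree v) (hρ : (Fintype.card V : ℝ) - 4 < specRad G)
    (hK : G.IsClique (U : Set V)ᶜ)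
    (hdeg : ∀ u ∈ U, G.degree u ≤ #U ∧ 2 * G.degree u + 1 ≤ Fintype.card V) : #U ≤ 3 := by
  classical
  by_contra! h4
  have h12 := card_lt_twelve_of_sub_four_lt_specRad (by omega) hmin hρ fun u hu ↦ (hdeg u hu).2
  have hcard := card_add_card_compl U
  obtain ⟨u, hu, hu_min⟩ := exists_min_image U (fun v ↦ G.degree v) (card_pos.1 (by omega))
  let m := min #U ((Fintype.card V - 1) / 2)
  let d := min (G.degree u) (#Uᶜ - 1)
  have hdeg_le : ∀ v ∈ U, G.degree v ≤ m := fun v hv ↦ by have := hdeg v hv; omega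
  have hle_deg (v : V) : d ≤ G.degree v := by
    by_cases hv : v ∈ U
    · exact (min_le_left _ _).trans (hu_min v hv)
    · have := degree_add_card_add_one_of_isClique_compl hK hv
      omega
  have hlow := lt_sum_degree_of_sub_four_lt_specRad (d := d) (by omega) (by omega) hle_deg hρ
  have hup := sum_degree_add_card_le_of_isClique_compl hK hdeg_le hu
  have hd_ge : 2 * G.degree u ≤ 3 * d := by have := hdeg_le u hu; omega
  have hnum := sub_three_mul_add_four_add_le (n := Fintype.card V) (s := #U) (m := m)
    (by omega) (by omega) (by omega) (by omega) (by omega)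
  zify [(by omega : 1 ≤ #U)] at hup hd_ge hcard
  rw [eq_sub_of_add_eq' hcard] at hup
  linarith

end Counting

section Extremal

open Finset

theorem adj_Mn_zero {n : ℕ} [NeZero n] {i : Fin n} (hi : i ≠ 0) : (Mn n).Adj i 0 := by
  rw [Mn, fromRel_adj, Fin.val_zero]
  refine ⟨hi, .inl ?_⟩
  omega

theorem connected_Mn (n : ℕ) [NeZero n] : (Mn n).Connected :=
  connected_iff_exists_forall_reachable _ |>.2 ⟨0, fun i ↦ by
    obtain rfl | hi := eq_or_ne i 0
    · exact .rfl
    · exact (adj_Mn_zero hi).symm.reachable⟩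

theorem sub_four_lt_specRad_Mn {n : ℕ} (hn : 4 ≤ n) : (n : ℝ) - 4 < specRad (Mn n) := by
  have : NeZero n := ⟨by omega⟩
  let C : Finset (Fin n) := {i | (i : ℕ) < n - 3}
  have hC : (Mn n).IsClique C := fun i hi j hj hij ↦ by
    simp only [C, coe_filter_univ, Set.mem_ofPred_eq] at hi hj
    exact (fromRel_adj ..).2 ⟨hij, .inl (.inl ⟨hi, hj⟩)⟩
  have hcard : #C = n - 3 := by
    simp [C, Fin.card_filter_val_lt]
  have hlt := card_sub_one_lt_specRad (connected_Mn n) hC (card_pos.1 (by omega))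
    (u := ⟨n - 3, by omega⟩) (by simp [C])
  rw [hcard] at hlt
  push_cast [(by omega : 3 ≤ n)] at hlt
  linarith

variable {V : Type*} [Fintype V] [DecidableEq V] {G : SimpleGraph V}

theorem IsDegreeClosed.isHamiltonian_or_nonempty_iso_Mn [DecidableRel G.Adj] (hT : IsOneTough G)
    (hG : IsDegreeClosed G) (hV : 18 ≤ Fintype.card V)
    (hρ : (Fintype.card V : ℝ) - 4 < specRad G) :
    G.IsHamiltonian ∨ Nonempty (G ≃g Mn (Fintype.card V)) := by
  obtain ⟨U, hK, hdeg⟩ := hG.exists_isClique_compl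
  have hle := card_le_three_of_sub_four_lt_specRad hV (hT.two_le_degree (by omega)) hρ hK hdeg
  obtain rfl | hne := U.eq_empty_or_nonempty
  · obtain ⟨v⟩ : Nonempty V := Fintype.card_pos_iff.1 (by omega)
    exact .inl (isHamiltonian_of_isChain_of_isClique (by omega) hK (l := [v]) (by simp) (by simp)
      (by simp) (by simp) (by simp) (by simp))
  · have hdegU : ∀ u ∈ U, G.degree u ≤ #U := fun u hu ↦ (hdeg u hu).1
    have hge := hG.three_le_card_of_isClique_compl hT hK (by omega) hne hdegU
    exact hG.isHamiltonian_or_nonempty_iso_Mn_of_card_eq_three hT (by omega) hK (by omega) hdegU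

theorem IsOneTough.isHamiltonian_or_exists_le_iso_Mn (hT : IsOneTough G)
    (hV : 18 ≤ Fintype.card V) (hρ : (Fintype.card V : ℝ) - 4 < specRad G) :
    G.IsHamiltonian ∨ ∃ H, G ≤ H ∧ Nonempty (H ≃g Mn (Fintype.card V)) := by
  classical
  have : Nonempty V := Fintype.card_pos_iff.1 (by omega)
  refine or_iff_not_imp_left.2 fun hham ↦ ?_
  obtain ⟨H, hGH, hH⟩ :=
    Finite.exists_le_maximal (p := fun H : SimpleGraph V ↦ ¬H.IsHamiltonian) hham
  have hclosed := isDegreeClosed_of_maximal_not_isHamiltonian (by omega) hH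
  have hρH := hρ.trans_le (specRad_mono hGH)
  exact ⟨H, hGH, (hclosed.isHamiltonian_or_nonempty_iso_Mn (hT.mono hGH) hV hρH).resolve_left
    hH.prop⟩

end Extremal

/-- A connected non-complete graph of order `n ≥ 18` with toughness `t(G) ≥ 1`
and `ρ(G) ≥ ρ(M_n)` contains a Hamiltonian cycle, unless `G ≅ M_n`. -/
theorem stmt2 {V : Type*} [Fintype V] [DecidableEq V] (n : ℕ) (hn : 18 ≤ n)
    (G : SimpleGraph V) (hcard : Fintype.card V = n)
    (hconn : G.Connected) (hnc : G ≠ ⊤)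
    (htough : 1 ≤ toughness G)
    (hrho : specRad (Mn n) ≤ specRad G) :
    G.IsHamiltonian ∨ Nonempty (G ≃g Mn n) := by
  subst hcard
  have := hconn.nonempty
  have hT := isOneTough_of_one_le_toughness htough
  have hρ := (sub_four_lt_specRad_Mn (by omega)).trans_le hrho
  obtain hham | ⟨H, hGH, ⟨e⟩⟩ := hT.isHamiltonian_or_exists_le_iso_Mn hn hρ
  · exact .inl hham
  obtain rfl | hlt := hGH.eq_or_lt
  · exact .inr ⟨e⟩
  have hHlt : specRad G < specRad H := specRad_lt_of_lt (hconn.mono hGH) hlt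
  exact absurd ((specRad_le_of_iso e).trans hrho) hHlt.not_ge
end

section
/- Let H be a balanced bipartite graph with parts X and Y, |X| = |Y| = n, which is closed in the sense that every pair of non-adjacent vertices u ∈ X and v ∈ Y satisfies d_H(u) + d_H(v) ≤ n. Let X_0 = {u ∈ X : d_H(u) > n/2} and Y_0 = {v ∈ Y : d_H(v) > n/2}, and suppose |Y_0| > n/2. Then every vertex u ∈ X \ X_0 satisfies d_H(u) ≤ n − |X_0|, and symmetrically (if |X_0| > n/2) every vertex v ∈ Y \ Y_0 satisfies d_H(v) ≤ n − |Y_0|. -/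
open SimpleGraph

/-! A vertex `u` of low degree has fewer neighbours than `Y₀` has elements, so it misses some
`v ∈ Y₀`. Closedness forces `X₀ ⊆ N(v)`, and applied once more to the pair `u, v` it gives
`d(u) + |X₀| ≤ d(u) + d(v) ≤ n`. -/

/-- Closedness of a pair of parts, with the bound `n` a free parameter and `X`, `Y` arbitrary vertex
sets, so that the notion is symmetric in the two parts. -/
def IsDegreeSumClosed {V : Type*} (H : SimpleGraph V) (n : ℕ) (X Y : Set V) : Prop :=
  ∀ u ∈ X, ∀ v ∈ Y, ¬ H.Adj u v → (H.neighborSet u).ncard + (H.neighborSet v).ncard ≤ n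

/-- The vertices of `S` of degree greater than `a`; for `a = n / 2` and `S = X`, `Y` these are the
sets `X₀`, `Y₀`. -/
def verticesOfDegreeGT {V : Type*} (H : SimpleGraph V) (a : ℝ) (S : Set V) : Set V :=
  {v ∈ S | a < ((H.neighborSet v).ncard : ℝ)}

section

variable {V : Type*} {H : SimpleGraph V} {n : ℕ} {X Y : Set V} {a b : ℝ} {u v : V}

theorem IsDegreeSumClosed.symm (hclosed : IsDegreeSumClosed H n X Y) :
    IsDegreeSumClosed H n Y X := fun v hv u hu hvu =>
  (add_comm _ _).trans_le (hclosed u hu v hv fun huv => hvu huv.symm)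

theorem ncard_neighborSet_le_of_mem_diff (hu : u ∈ X \ verticesOfDegreeGT H a X) :
    ((H.neighborSet u).ncard : ℝ) ≤ a :=
  not_lt.1 fun h => hu.2 ⟨hu.1, h⟩

theorem IsDegreeSumClosed.adj (hclosed : IsDegreeSumClosed H n X Y) (hab : n ≤ a + b)
    (hu : u ∈ verticesOfDegreeGT H a X) (hv : v ∈ verticesOfDegreeGT H b Y) : H.Adj u v := by
  by_contra huv
  have hsum : ((H.neighborSet u).ncard : ℝ) + (H.neighborSet v).ncard ≤ n :=
    mod_cast hclosed u hu.1 v hv.1 huv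
  linarith [hu.2, hv.2]

theorem IsDegreeSumClosed.verticesOfDegreeGT_subset_neighborSet
    (hclosed : IsDegreeSumClosed H n X Y) (hab : n ≤ a + b)
    (hv : v ∈ verticesOfDegreeGT H b Y) : verticesOfDegreeGT H a X ⊆ H.neighborSet v :=
  fun _ hu => (hclosed.adj hab hu hv).symm

theorem stmt11_general [∀ v, Finite (H.neighborSet v)] (hclosed : IsDegreeSumClosed H n X Y)
    (hab : n ≤ a + b) (hbig : a < ((verticesOfDegreeGT H b Y).ncard : ℝ)) :
    ∀ u ∈ X \ verticesOfDegreeGT H a X,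
      (H.neighborSet u).ncard + (verticesOfDegreeGT H a X).ncard ≤ n := by
  intro u hu
  have hlt : (H.neighborSet u).ncard < (verticesOfDegreeGT H b Y).ncard :=
    mod_cast (ncard_neighborSet_le_of_mem_diff hu).trans_lt hbig
  obtain ⟨v, hv, huv⟩ := Set.exists_mem_notMem_of_ncard_lt_ncard hlt
  calc (H.neighborSet u).ncard + (verticesOfDegreeGT H a X).ncard
      ≤ (H.neighborSet u).ncard + (H.neighborSet v).ncard := by
        gcongr
        · exact Set.toFinite _
        · exact hclosed.verticesOfDegreeGT_subset_neighborSet hab hv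
    _ ≤ n := hclosed u hu.1 v hv.1 huv

end

/-- In a closed balanced bipartite graph `H` (non-adjacent `u ∈ X`, `v ∈ Y`
satisfy `d(u) + d(v) ≤ n`), if `|Y₀| > n/2` then every `u ∈ X \ X₀` has `d(u) ≤ n - |X₀|`,
and symmetrically if `|X₀| > n/2` then every `v ∈ Y \ Y₀` has `d(v) ≤ n - |Y₀|`. -/
theorem stmt11 {V : Type*} [Fintype V] (n : ℕ)
    (H : SimpleGraph V) (X Y : Set V)
    (hbip : IsBipartition H X Y) (hX : X.ncard = n) (hY : Y.ncard = n)
    (hclosed : ∀ u ∈ X, ∀ v ∈ Y, ¬ H.Adj u v →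
      (H.neighborSet u).ncard + (H.neighborSet v).ncard ≤ n)
    (X0 Y0 : Set V)
    (hX0 : X0 = {u ∈ X | (n : ℝ) / 2 < ((H.neighborSet u).ncard : ℝ)})
    (hY0 : Y0 = {v ∈ Y | (n : ℝ) / 2 < ((H.neighborSet v).ncard : ℝ)})
    (hY0big : (n : ℝ) / 2 < (Y0.ncard : ℝ)) :
    (∀ u ∈ X \ X0, (H.neighborSet u).ncard ≤ n - X0.ncard) ∧
      ((n : ℝ) / 2 < (X0.ncard : ℝ) →
        ∀ v ∈ Y \ Y0, (H.neighborSet v).ncard ≤ n - Y0.ncard) := by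
  subst hX0 hY0
  change IsDegreeSumClosed H n X Y at hclosed
  have half : (n : ℝ) ≤ n / 2 + n / 2 := (add_halves _).ge
  exact ⟨fun u hu => Nat.le_sub_of_add_le (stmt11_general hclosed half hY0big u hu),
    fun hX0big v hv => Nat.le_sub_of_add_le (stmt11_general hclosed.symm half hX0big v hv)⟩
end
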